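/- Let U ⊆ ℂ be an open set containing (α₀, 0), let z = x + iy : U → ℂ be holomorphic, ψ : U → ℝ smooth (C^∞), and G, B real constants with G ≠ 0. Assume: (a) ψ(α,0) = 0 for all α with (α,0) ∈ U; (b) ψ_β(α,0) = √(2(B − G·y(α,0))·(x_α(α,0)² + y_α(α,0)²)) for all α with (α,0) ∈ U; (c) x_α(α₀,0) = 0; (d) y_α(α₀,0) > 0; (e) B − G·y(α₀,0) > 0. Let k ≥ 2 be the least integer with ∂_α^k x(α₀,0) ≠ 0, and assume k is odd and ∂_α^k x(α₀,0) > 0 (so α ↦ x(α,0) has no local extremum at α₀). Define F := ψ_α y_α + ψ_β x_α. Then there exist ε > 0 and a C¹ function h : (α₀ − ε, α₀ + ε) → ℝ with h(α₀) = 0 such that for (α,β) with |α − α₀| < ε, |β| < ε: F(α,β) = 0 if and only if β = h(α); and there is ε' ∈ (0, ε] such that: if G > 0 then h(α) > 0 for all 0 < |α − α₀| < ε' (the critical layer lies outside the fluid domain {β < 0} and touches the surface only at α₀), while if G < 0 then h(α) < 0 for all 0 < |α − α₀| < ε' (the critical layer lies inside the fluid and touches the surface at α₀). -/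

import Mathlib

/-- The numerator `ψ_α y_α + ψ_β x_α` of the horizontal fluid velocity, in conformal
coordinates, where `ℂ` is identified with `ℝ²` via `ζ = α + iβ`, `x = Re z`, `y = Im z`. -/
noncomputable def FnumC (z : ℂ → ℂ) (ψ : ℂ → ℝ) : ℂ → ℝ := fun ζ =>
  fderiv ℝ ψ ζ 1 * fderiv ℝ (fun w => (z w).im) ζ 1
    + fderiv ℝ ψ ζ Complex.I * fderiv ℝ (fun w => (z w).re) ζ 1

/-!
On the surface `ψ_α = 0`, so there `F = ψ_β x_α`. At the point where `x_α = 0`, the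
Cauchy-Riemann equations give `F_β = ψ_αβ y_α - ψ_β y_αα`, and differentiating Bernoulli's law
`ψ_β² = 2 (B - G y) |z'|²` along the surface turns this into `ψ_β F_β = -G y_α⁴`. Hence `F_β ≠ 0`
and the critical layer is a graph `β = h(α)` with `h ∼ -F / F_β`, that is,
`G h ∼ (2 (B - G y) / y_α²) x_α`. The layer therefore lies on the side of the surface given by the
sign of `G x_α`, and `x_α` is positive near `α₀` when its first nonzero Taylor coefficient is
positive and of even order.
-/

open Set Filter Topology Asymptotics

section Taylor

variable {E : Type*} [NormedAddCommGroup E] [NormedSpace ℝ E] {a : ℝ} {n : ℕ}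

theorem isLittleO_sub_of_iteratedDeriv_eq_zero {g : ℝ → E} (hg : ContDiffAt ℝ n g a)
    (hzero : ∀ j < n, iteratedDeriv j g a = 0) :
    (fun x => g x - ((n.factorial : ℝ)⁻¹ * (x - a) ^ n) • iteratedDeriv n g a)
      =o[𝓝 a] fun x => (x - a) ^ n := by
  obtain ⟨u, hu, hgu⟩ := hg.contDiffOn le_rfl (by simp)
  obtain ⟨r, hr, hru⟩ := Metric.mem_nhds_iff.1 (by simpa using hu : u ∈ 𝓝 a)
  have ha : a ∈ Metric.ball a r := Metric.mem_ball_self hr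
  have hTaylor := taylor_isLittleO (convex_ball a r) ha (hgu.mono hru)
  rw [Metric.isOpen_ball.nhdsWithin_eq ha] at hTaylor
  refine hTaylor.congr_left fun x => ?_
  rw [taylor_within_apply, Finset.sum_range_succ, Finset.sum_eq_zero, zero_add,
    iteratedDerivWithin_of_isOpen Metric.isOpen_ball ha]
  intro j hj
  rw [iteratedDerivWithin_of_isOpen Metric.isOpen_ball ha, hzero j (Finset.mem_range.1 hj),
    smul_zero]

theorem isEquivalent_of_iteratedDeriv_ne_zero {g : ℝ → ℝ} (hg : ContDiffAt ℝ n g a)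
    (hzero : ∀ j < n, iteratedDeriv j g a = 0) (hne : iteratedDeriv n g a ≠ 0) :
    g ~[𝓝 a] fun x => iteratedDeriv n g a / n.factorial * (x - a) ^ n := by
  have hcoeff : iteratedDeriv n g a / n.factorial ≠ 0 := by positivity
  refine ((isLittleO_sub_of_iteratedDeriv_eq_zero hg hzero).const_mul_right hcoeff).congr_left
    fun x => ?_
  simp only [Pi.sub_apply, smul_eq_mul]
  ring

theorem eventually_pos_of_even_of_iteratedDeriv_pos {g : ℝ → ℝ} (hg : ContDiffAt ℝ n g a)
    (hn : Even n) (hzero : ∀ j < n, iteratedDeriv j g a = 0) (hpos : 0 < iteratedDeriv n g a) :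
    ∀ᶠ x in 𝓝[≠] a, 0 < g x := by
  refine ((isEquivalent_of_iteratedDeriv_ne_zero hg hzero hpos.ne').mono
    nhdsWithin_le_nhds).eventually_pos ?_
  filter_upwards [self_mem_nhdsWithin] with x hx
  have := hn.pow_pos (sub_ne_zero.2 hx)
  positivity

theorem eventually_deriv_pos_of_odd_of_iteratedDeriv_pos {g : ℝ → ℝ} (hg : ContDiffAt ℝ n g a)
    (hn : Odd n) (hzero : ∀ j, 1 ≤ j → j < n → iteratedDeriv j g a = 0)
    (hpos : 0 < iteratedDeriv n g a) : ∀ᶠ x in 𝓝[≠] a, 0 < deriv g x := by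
  obtain ⟨m, rfl⟩ : ∃ m, n = m + 1 := ⟨n - 1, (Nat.sub_add_cancel hn.pos).symm⟩
  have hderiv : ContDiffAt ℝ m (deriv g) a :=
    (hg.fderiv_right (m := m) (by simp)).clm_apply contDiffAt_const
  rw [iteratedDeriv_succ'] at hpos
  refine eventually_pos_of_even_of_iteratedDeriv_pos hderiv (by grind) (fun j hj => ?_) hpos
  rw [← iteratedDeriv_succ']
  exact hzero (j + 1) (by omega) (by omega)

end Taylor

section ImplicitFunction

variable {𝕜 E : Type*} [RCLike 𝕜] [NormedAddCommGroup E] [NormedSpace 𝕜 E] {F : E × 𝕜 → 𝕜}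
  {a : E} {b : 𝕜}

theorem isEquivalent_sub_of_hasStrictFDerivAt {F' : E × 𝕜 →L[𝕜] 𝕜} {h : E → 𝕜}
    (hF : HasStrictFDerivAt F F' (a, b)) (hd : F' (0, 1) ≠ 0) (hh : Tendsto h (𝓝 a) (𝓝 b))
    (hzero : ∀ᶠ x in 𝓝 a, F (x, h x) = 0) :
    (fun x => h x - b) ~[𝓝 a] fun x => -F (x, b) / F' (0, 1) := by
  have hpair : Tendsto (fun x => ((x, b), (x, h x))) (𝓝 a) (𝓝 ((a, b), (a, b))) :=
    (tendsto_id.prodMk_nhds tendsto_const_nhds).prodMk_nhds (tendsto_id.prodMk_nhds hh)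
  have hincr := (hF.isLittleO.comp_tendsto hpair).const_mul_left (-(F' (0, 1))⁻¹)
  refine IsEquivalent.symm (IsLittleO.isEquivalent ?_)
  refine (hincr.trans_isBigO (isBigO_of_le _ fun x => ?_)).congr' ?_ .rfl
  · simp [norm_sub_rev]
  · filter_upwards [hzero] with x hx
    have hlin : F' ((x, b) - (x, h x)) = (b - h x) * F' (0, 1) := by
      rw [← smul_eq_mul, ← map_smul]
      simp
    simp only [Function.comp_apply, Pi.sub_apply, hx, hlin]
    field_simp
    ring

theorem exists_zeroSet_eq_graph [CompleteSpace E] {n : WithTop ℕ∞}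
    (hF : ContDiffAt 𝕜 n F (a, b)) (hn : n ≠ 0) (hF0 : F (a, b) = 0)
    (hd : fderiv 𝕜 F (a, b) (0, 1) ≠ 0) :
    ∃ h : E → 𝕜, ContDiffAt 𝕜 n h a ∧ h a = b ∧
      (∀ᶠ p in 𝓝 (a, b), F p = 0 ↔ p.2 = h p.1) ∧
      (fun x => h x - b) ~[𝓝 a] fun x => -F (x, b) / fderiv 𝕜 F (a, b) (0, 1) := by
  have hinv : (fderiv 𝕜 F (a, b) ∘L .inr 𝕜 E 𝕜).IsInvertible := by
    refine ⟨ContinuousLinearEquiv.unitsEquivAut 𝕜 (Units.mk0 _ hd), ?_⟩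
    ext
    simp
  have hself := hF.implicitFunction_apply_self hn hinv
  have hgraph := hF.eventually_apply_eq_iff_implicitFunction hn hinv
  have hzero := hF.eventually_apply_implicitFunction hn hinv
  have hsmooth := hF.contDiffAt_implicitFunction hn hinv
  simp only [hF0] at hgraph hzero
  refine ⟨hF.implicitFunction hn hinv, hsmooth, hself, ?_, ?_⟩
  · simpa only [eq_comm (b := Prod.snd _)] using hgraph
  · refine isEquivalent_sub_of_hasStrictFDerivAt (hF.hasStrictFDerivAt hn) hd ?_ hzero
    simpa only [ContinuousAt, hself] using hsmooth.continuousAt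

end ImplicitFunction

section ComplexPlane

variable {E : Type*} [NormedAddCommGroup E] [NormedSpace ℝ E]

theorem eventually_nhds_ofReal {p : ℂ → Prop} {α₀ : ℝ} (hp : ∀ᶠ w in 𝓝 (α₀ : ℂ), p w) :
    ∀ᶠ α : ℝ in 𝓝 α₀, p α :=
  Complex.continuous_ofReal.continuousAt.eventually hp

theorem hasDerivAt_comp_ofReal {f : ℂ → E} {α : ℝ} (hf : DifferentiableAt ℝ f α) :
    HasDerivAt (fun t : ℝ => f t) (fderiv ℝ f α 1) α := by
  simpa using! hf.hasFDerivAt.comp_hasDerivAt α Complex.ofRealCLM.hasDerivAt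

theorem eventually_fderiv_apply_one_eq_zero {f : ℂ → E} {α₀ : ℝ} (hf : ContDiffAt ℝ 1 f α₀)
    (hzero : ∀ᶠ α : ℝ in 𝓝 α₀, f α = 0) : ∀ᶠ α : ℝ in 𝓝 α₀, fderiv ℝ f α 1 = 0 := by
  have hsmooth := eventually_nhds_ofReal (hf.eventually (by simp))
  filter_upwards [hzero.eventually_nhds, hsmooth] with α hα hfα
  exact (hasDerivAt_comp_ofReal (hfα.differentiableAt one_ne_zero)).unique
    ((hasDerivAt_const α 0).congr_of_eventuallyEq hα)

theorem exists_zeroSet_eq_graph_ofReal {F : ℂ → ℝ} {α₀ : ℝ} {n : WithTop ℕ∞}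
    (hF : ContDiffAt ℝ n F α₀) (hn : n ≠ 0) (hF0 : F α₀ = 0)
    (hd : fderiv ℝ F α₀ Complex.I ≠ 0) :
    ∃ h : ℝ → ℝ, ContDiffAt ℝ n h α₀ ∧ h α₀ = 0 ∧
      (∀ᶠ p : ℝ × ℝ in 𝓝 (α₀, 0), F (p.1 + p.2 * Complex.I) = 0 ↔ p.2 = h p.1) ∧
      h ~[𝓝 α₀] fun α : ℝ => -F α / fderiv ℝ F α₀ Complex.I := by
  set e := Complex.equivRealProdCLM.symm
  have he : ∀ p, e p = p.1 + p.2 * Complex.I := Complex.equivRealProdCLM_symm_apply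
  have he0 : e (α₀, 0) = α₀ := by simp [he]
  have hFe : ContDiffAt ℝ n (F ∘ e) (α₀, 0) :=
    (he0 ▸ hF).comp (α₀, (0 : ℝ)) e.contDiff.contDiffAt
  have hFβ : fderiv ℝ (F ∘ e) (α₀, 0) (0, 1) = fderiv ℝ F α₀ Complex.I := by
    rw [e.comp_right_fderiv, he0]
    simp [he]
  simpa [hFβ, he] using exists_zeroSet_eq_graph hFe hn (by simp [he0, hF0]) (hFβ ▸ hd)

theorem hasFDerivAt_clm_comp (L : ℂ →L[ℝ] E) {f : ℂ → ℂ} {w : ℂ} (hf : DifferentiableAt ℂ f w) :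
    HasFDerivAt (fun ζ => L (f ζ)) (L ∘L ContinuousLinearMap.mul ℝ ℂ (deriv f w)) w := by
  have hreal := L.hasFDerivAt.comp w (hf.hasDerivAt.hasFDerivAt.restrictScalars ℝ)
  refine hreal.congr_fderiv ?_
  ext v
  simp [mul_comm]

theorem hasDerivAt_clm_comp_ofReal (L : ℂ →L[ℝ] E) {f : ℂ → ℂ} {α : ℝ}
    (hf : DifferentiableAt ℂ f α) : HasDerivAt (fun t : ℝ => L (f t)) (L (deriv f α)) α := by
  have hL := hasFDerivAt_clm_comp L hf
  simpa [hL.fderiv] using hasDerivAt_comp_ofReal hL.differentiableAt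

theorem contDiffAt_clm_comp_deriv (L : ℂ →L[ℝ] E) {f : ℂ → ℂ} {w : ℂ} (hf : AnalyticAt ℂ f w)
    {n : WithTop ℕ∞} : ContDiffAt ℝ n (fun ζ => L (deriv f ζ)) w :=
  L.contDiff.contDiffAt.comp w (hf.deriv.contDiffAt.restrict_scalars ℝ)

theorem fderiv_re_apply {f : ℂ → ℂ} {w : ℂ} (hf : DifferentiableAt ℂ f w) (v : ℂ) :
    fderiv ℝ (fun ζ => (f ζ).re) w v = (deriv f w * v).re := by
  simpa using! congr($((hasFDerivAt_clm_comp Complex.reCLM hf).fderiv) v)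

theorem fderiv_im_apply {f : ℂ → ℂ} {w : ℂ} (hf : DifferentiableAt ℂ f w) (v : ℂ) :
    fderiv ℝ (fun ζ => (f ζ).im) w v = (deriv f w * v).im := by
  simpa using! congr($((hasFDerivAt_clm_comp Complex.imCLM hf).fderiv) v)

end ComplexPlane

section CriticalLayer

variable {z : ℂ → ℂ} {ψ : ℂ → ℝ} {w : ℂ}

theorem FnumC_eq_deriv (hz : DifferentiableAt ℂ z w) :
    FnumC z ψ w = fderiv ℝ ψ w 1 * (deriv z w).im + fderiv ℝ ψ w Complex.I * (deriv z w).re := by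
  rw [FnumC, fderiv_re_apply hz, fderiv_im_apply hz, mul_one]

theorem FnumC_eventuallyEq_deriv (hz : AnalyticAt ℂ z w) :
    FnumC z ψ =ᶠ[𝓝 w] fun ζ =>
      fderiv ℝ ψ ζ 1 * (deriv z ζ).im + fderiv ℝ ψ ζ Complex.I * (deriv z ζ).re :=
  hz.eventually_analyticAt.mono fun _ hζ => FnumC_eq_deriv hζ.differentiableAt

theorem contDiffAt_FnumC {n : WithTop ℕ∞} (hz : AnalyticAt ℂ z w)
    (hψ : ContDiffAt ℝ (n + 1) ψ w) : ContDiffAt ℝ n (FnumC z ψ) w := by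
  have hψ' : ContDiffAt ℝ n (fderiv ℝ ψ) w := hψ.fderiv_right le_rfl
  exact (((hψ'.clm_apply contDiffAt_const).mul (contDiffAt_clm_comp_deriv Complex.imCLM hz)).add
    ((hψ'.clm_apply contDiffAt_const).mul
      (contDiffAt_clm_comp_deriv Complex.reCLM hz))).congr_of_eventuallyEq
    (FnumC_eventuallyEq_deriv hz)

theorem fderiv_FnumC_apply (hz : AnalyticAt ℂ z w) (hψ : DifferentiableAt ℝ (fderiv ℝ ψ) w)
    (v : ℂ) :
    fderiv ℝ (FnumC z ψ) w v =
      fderiv ℝ (fderiv ℝ ψ) w v 1 * (deriv z w).im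
        + fderiv ℝ ψ w 1 * (deriv (deriv z) w * v).im
        + fderiv ℝ (fderiv ℝ ψ) w v Complex.I * (deriv z w).re
        + fderiv ℝ ψ w Complex.I * (deriv (deriv z) w * v).re := by
  have hz' := hz.deriv.differentiableAt
  have hψα := hψ.hasFDerivAt.clm_apply (hasFDerivAt_const (1 : ℂ) w)
  have hψβ := hψ.hasFDerivAt.clm_apply (hasFDerivAt_const Complex.I w)
  have hF := (hψα.mul (hasFDerivAt_clm_comp Complex.imCLM hz')).add
    (hψβ.mul (hasFDerivAt_clm_comp Complex.reCLM hz'))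
  rw [(hF.congr_of_eventuallyEq (FnumC_eventuallyEq_deriv hz)).fderiv]
  simp only [Complex.imCLM_apply, ContinuousLinearMap.comp_zero, zero_add, Complex.reCLM_apply,
    add_apply, smul_apply, ContinuousLinearMap.comp_apply, ContinuousLinearMap.mul_apply',
    Complex.mul_im, smul_eq_mul, ContinuousLinearMap.flip_apply, Complex.mul_re]
  ring

theorem fderiv_mul_fderiv_fderiv_eq_of_bernoulli {G B α : ℝ} (hz : AnalyticAt ℂ z α)
    (hψ : DifferentiableAt ℝ (fderiv ℝ ψ) α)
    (hbernoulli : ∀ᶠ t : ℝ in 𝓝 α, fderiv ℝ ψ t Complex.I ^ 2 =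
      2 * (B - G * (z t).im) * ((deriv z t).re ^ 2 + (deriv z t).im ^ 2)) :
    fderiv ℝ ψ α Complex.I * fderiv ℝ (fderiv ℝ ψ) α 1 Complex.I =
      2 * (B - G * (z α).im) * ((deriv z α).re * (deriv (deriv z) α).re
          + (deriv z α).im * (deriv (deriv z) α).im)
        - G * (deriv z α).im * ((deriv z α).re ^ 2 + (deriv z α).im ^ 2) := by
  have hspeed := (hasDerivAt_comp_ofReal hψ).clm_apply (hasDerivAt_const α Complex.I)
  have hy := hasDerivAt_clm_comp_ofReal Complex.imCLM hz.differentiableAt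
  have hxα := hasDerivAt_clm_comp_ofReal Complex.reCLM hz.deriv.differentiableAt
  have hyα := hasDerivAt_clm_comp_ofReal Complex.imCLM hz.deriv.differentiableAt
  have hhead := (((hy.const_mul G).const_sub B).const_mul 2).mul ((hxα.pow 2).add (hyα.pow 2))
  have hderiv := (hspeed.pow 2).unique (hhead.congr_of_eventuallyEq hbernoulli)
  simp only [Nat.cast_ofNat, Nat.add_one_sub_one, pow_one, map_zero, add_zero,
    Complex.imCLM_apply, mul_neg, Complex.reCLM_apply, Pi.add_apply, Pi.pow_apply,
    neg_mul] at hderiv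
  linarith

theorem fderiv_mul_fderiv_FnumC_I_eq {G B α : ℝ} (hz : AnalyticAt ℂ z α)
    (hψ : ContDiffAt ℝ 2 ψ α) (hψα : fderiv ℝ ψ α 1 = 0)
    (hbernoulli : ∀ᶠ t : ℝ in 𝓝 α, fderiv ℝ ψ t Complex.I ^ 2 =
      2 * (B - G * (z t).im) * ((deriv z t).re ^ 2 + (deriv z t).im ^ 2))
    (hxα : (deriv z α).re = 0) :
    fderiv ℝ ψ α Complex.I * fderiv ℝ (FnumC z ψ) α Complex.I = -G * (deriv z α).im ^ 4 := by
  have hψ' : DifferentiableAt ℝ (fderiv ℝ ψ) α :=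
    (hψ.fderiv_right (m := 1) (by norm_num)).differentiableAt one_ne_zero
  have hsymm : fderiv ℝ (fderiv ℝ ψ) α Complex.I 1 = fderiv ℝ (fderiv ℝ ψ) α 1 Complex.I :=
    hψ.isSymmSndFDerivAt (by simp) _ _
  have hFβ : fderiv ℝ (FnumC z ψ) α Complex.I =
      fderiv ℝ (fderiv ℝ ψ) α 1 Complex.I * (deriv z α).im
        - fderiv ℝ ψ α Complex.I * (deriv (deriv z) α).im := by
    rw [fderiv_FnumC_apply hz hψ', hψα, hxα, hsymm, Complex.mul_I_re]
    ring
  have hspeed := hbernoulli.self_of_nhds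
  have hspeed' := fderiv_mul_fderiv_fderiv_eq_of_bernoulli hz hψ' hbernoulli
  rw [hxα] at hspeed hspeed'
  linear_combination fderiv ℝ ψ α Complex.I * hFβ + (deriv z α).im * hspeed'
    - (deriv (deriv z) α).im * hspeed

theorem FnumC_ofReal_isEquivalent {α₀ : ℝ} (hz : AnalyticAt ℂ z α₀) (hψ : ContDiffAt ℝ 2 ψ α₀)
    (hψα : ∀ᶠ α : ℝ in 𝓝 α₀, fderiv ℝ ψ α 1 = 0) (hψβ : fderiv ℝ ψ α₀ Complex.I ≠ 0) :
    (fun α : ℝ => FnumC z ψ α) ~[𝓝 α₀]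
      fun α : ℝ => fderiv ℝ ψ α₀ Complex.I * (deriv z α).re := by
  have hψβ_tendsto :
      Tendsto (fun α : ℝ => fderiv ℝ ψ α Complex.I) (𝓝 α₀) (𝓝 (fderiv ℝ ψ α₀ Complex.I)) :=
    ((hψ.fderiv_right (m := 1) (by norm_num)).continuousAt.clm_apply
      continuousAt_const).tendsto.comp Complex.continuous_ofReal.continuousAt
  refine (((isEquivalent_const_iff_tendsto hψβ).2 hψβ_tendsto).mul .refl).congr_left ?_
  filter_upwards [hψα, eventually_nhds_ofReal (FnumC_eventuallyEq_deriv (ψ := ψ) hz)]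
    with α hψα hF
  simp [hF, hψα]

theorem exists_criticalLayer_eq_graph {G B α₀ : ℝ} (hG : G ≠ 0) (hz : AnalyticAt ℂ z α₀)
    (hψ : ContDiffAt ℝ 2 ψ α₀) (hstream : ∀ᶠ α : ℝ in 𝓝 α₀, ψ α = 0)
    (hbernoulli : ∀ᶠ α : ℝ in 𝓝 α₀, fderiv ℝ ψ α Complex.I ^ 2 =
      2 * (B - G * (z α).im) * ((deriv z α).re ^ 2 + (deriv z α).im ^ 2))
    (hxα : (deriv z α₀).re = 0) (hyα : (deriv z α₀).im ≠ 0) (hhead : B - G * (z α₀).im ≠ 0) :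
    ∃ h : ℝ → ℝ, ContDiffAt ℝ 1 h α₀ ∧ h α₀ = 0 ∧
      (∀ᶠ p : ℝ × ℝ in 𝓝 (α₀, 0), FnumC z ψ (p.1 + p.2 * Complex.I) = 0 ↔ p.2 = h p.1) ∧
      (fun α => G * h α) ~[𝓝 α₀] fun α : ℝ =>
        2 * (B - G * (z α₀).im) / (deriv z α₀).im ^ 2 * (deriv z α).re := by
  have hψα := eventually_fderiv_apply_one_eq_zero (hψ.of_le one_le_two) hstream
  have hspeed : fderiv ℝ ψ α₀ Complex.I ^ 2 = 2 * (B - G * (z α₀).im) * (deriv z α₀).im ^ 2 := by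
    simpa [hxα] using hbernoulli.self_of_nhds
  have hψβ : fderiv ℝ ψ α₀ Complex.I ≠ 0 :=
    (pow_ne_zero_iff two_ne_zero).1 (by rw [hspeed]; positivity)
  have hFβ := fderiv_mul_fderiv_FnumC_I_eq hz hψ hψα.self_of_nhds hbernoulli hxα
  have hFβ_ne : fderiv ℝ (FnumC z ψ) α₀ Complex.I ≠ 0 :=
    right_ne_zero_of_mul (hFβ ▸ mul_ne_zero (neg_ne_zero.2 hG) (pow_ne_zero 4 hyα))
  have hF0 : FnumC z ψ α₀ = 0 := by
    rw [FnumC_eq_deriv hz.differentiableAt, hψα.self_of_nhds, hxα, zero_mul, mul_zero, add_zero]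
  obtain ⟨h, hsmooth, hself, hgraph, hasymp⟩ := exists_zeroSet_eq_graph_ofReal
    (contDiffAt_FnumC (n := 1) hz (by simpa [one_add_one_eq_two] using hψ)) one_ne_zero hF0 hFβ_ne
  refine ⟨h, hsmooth, hself, hgraph, ?_⟩
  have hcoeff : -G / fderiv ℝ (FnumC z ψ) α₀ Complex.I * fderiv ℝ ψ α₀ Complex.I =
      2 * (B - G * (z α₀).im) / (deriv z α₀).im ^ 2 := by
    rw [div_mul_eq_mul_div, div_eq_div_iff hFβ_ne (pow_ne_zero 2 hyα)]
    refine mul_left_cancel₀ hψβ ?_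
    linear_combination -G * (deriv z α₀).im ^ 2 * hspeed - 2 * (B - G * (z α₀).im) * hFβ
  have hGh := (IsEquivalent.refl (u := fun _ => G)).mul (hasymp.trans
    ((FnumC_ofReal_isEquivalent hz hψ hψα hψβ).neg.div (.refl (u := fun _ => _))))
  refine hGh.congr_right (.of_eq (funext fun α => ?_))
  rw [← hcoeff, Pi.mul_apply, Pi.div_apply]
  ring

theorem eventually_fderiv_sq_eq_of_eq_sqrt {G B α₀ : ℝ} (hz : ContinuousAt z α₀)
    (hhead : 0 < B - G * (z α₀).im)
    (hbernoulli : ∀ᶠ α : ℝ in 𝓝 α₀, fderiv ℝ ψ α Complex.I =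
      √(2 * (B - G * (z α).im) * ((deriv z α).re ^ 2 + (deriv z α).im ^ 2))) :
    ∀ᶠ α : ℝ in 𝓝 α₀, fderiv ℝ ψ α Complex.I ^ 2 =
      2 * (B - G * (z α).im) * ((deriv z α).re ^ 2 + (deriv z α).im ^ 2) := by
  have hcont : ContinuousAt (fun w => B - G * (z w).im) α₀ := by
    have := Complex.continuous_im.continuousAt.comp hz
    exact continuousAt_const.sub (continuousAt_const.mul this)
  filter_upwards [hbernoulli, eventually_nhds_ofReal (hcont.eventually_const_lt hhead)]
    with α hα hheadα
  rw [hα, Real.sq_sqrt (by positivity)]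

end CriticalLayer

section Radius

variable {a : ℝ}

theorem exists_radius_of_eventually_prod {p : ℝ → ℝ → Prop}
    (hp : ∀ᶠ q : ℝ × ℝ in 𝓝 (a, 0), p q.1 q.2) :
    ∃ ε > 0, ∀ α β : ℝ, |α - a| < ε → |β| < ε → p α β := by
  obtain ⟨ε, hε, hball⟩ := Metric.eventually_nhds_iff.1 hp
  refine ⟨ε, hε, fun α β hα hβ => hball (y := (α, β)) ?_⟩
  simpa [Prod.dist_eq, Real.dist_eq] using And.intro hα hβ

theorem exists_radius_forall_pos_and_forall_neg {h : ℝ → ℝ} {c ε : ℝ} (hε : 0 < ε)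
    (hpos : ∀ᶠ x in 𝓝[≠] a, 0 < c * h x) :
    ∃ ε' : ℝ, 0 < ε' ∧ ε' ≤ ε ∧
      (0 < c → ∀ x : ℝ, x ≠ a → |x - a| < ε' → 0 < h x) ∧
      (c < 0 → ∀ x : ℝ, x ≠ a → |x - a| < ε' → h x < 0) := by
  obtain ⟨r, hr, hball⟩ := Metric.eventually_nhds_iff.1 (eventually_nhdsWithin_iff.1 hpos)
  have hsign : ∀ x, x ≠ a → |x - a| < min ε r → 0 < c * h x := fun x hne hx =>
    hball (hx.trans_le (min_le_right ε r)) hne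
  exact ⟨min ε r, lt_min hε hr, min_le_left ε r,
    fun hc x hne hx => pos_of_mul_pos_right (hsign x hne hx) hc.le,
    fun hc x hne hx => neg_of_mul_pos_right (hsign x hne hx) hc.le⟩

end Radius

theorem eventually_fderiv_apply_one_pos_of_odd {f : ℂ → ℝ} {α₀ : ℝ} {k : ℕ}
    (hf : ContDiffAt ℝ k f α₀) (hk : Odd k)
    (hzero : ∀ j, 1 ≤ j → j < k → iteratedDeriv j (fun α : ℝ => f α) α₀ = 0)
    (hpos : 0 < iteratedDeriv k (fun α : ℝ => f α) α₀) :
    ∀ᶠ α : ℝ in 𝓝[≠] α₀, 0 < fderiv ℝ f α 1 := by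
  have hline : ContDiffAt ℝ k (fun α : ℝ => f α) α₀ :=
    hf.comp α₀ Complex.ofRealCLM.contDiff.contDiffAt
  have hsmooth := (eventually_nhds_ofReal (hf.eventually (by simp))).filter_mono
    (nhdsWithin_le_nhds (s := {α₀}ᶜ))
  filter_upwards [eventually_deriv_pos_of_odd_of_iteratedDeriv_pos hline hk hzero hpos, hsmooth]
    with α hα hfα
  rwa [← (hasDerivAt_comp_ofReal
    (hfα.differentiableAt (by exact_mod_cast hk.pos.ne'))).deriv]

theorem stmt_12_general (U : Set ℂ) (hU : IsOpen U) (α₀ : ℝ) (hα₀ : (α₀ : ℂ) ∈ U)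
    (z : ℂ → ℂ) (hz : DifferentiableOn ℂ z U)
    (ψ : ℂ → ℝ) (hψ : ContDiffOn ℝ 2 ψ U) (G B : ℝ) (hG : G ≠ 0)
    (ha : ∀ α : ℝ, (α : ℂ) ∈ U → ψ (α : ℂ) = 0)
    (hb : ∀ α : ℝ, (α : ℂ) ∈ U →
      fderiv ℝ ψ (α : ℂ) Complex.I
        = Real.sqrt (2 * (B - G * (z (α : ℂ)).im) *
            ((fderiv ℝ (fun w => (z w).re) (α : ℂ) 1) ^ 2
              + (fderiv ℝ (fun w => (z w).im) (α : ℂ) 1) ^ 2)))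
    (hc : fderiv ℝ (fun w => (z w).re) (α₀ : ℂ) 1 = 0)
    (hd : fderiv ℝ (fun w => (z w).im) (α₀ : ℂ) 1 ≠ 0)
    (he : 0 < B - G * (z (α₀ : ℂ)).im)
    (hx : ∀ᶠ α : ℝ in 𝓝[≠] α₀, 0 < fderiv ℝ (fun w => (z w).re) (α : ℂ) 1) :
    ∃ ε > (0 : ℝ), ∃ h : ℝ → ℝ,
      ContDiffOn ℝ 1 h (Set.Ioo (α₀ - ε) (α₀ + ε)) ∧
      h α₀ = 0 ∧
      (∀ α β : ℝ, |α - α₀| < ε → |β| < ε →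
        ((α : ℂ) + (β : ℂ) * Complex.I ∈ U ∧
          (FnumC z ψ ((α : ℂ) + (β : ℂ) * Complex.I) = 0 ↔ β = h α))) ∧
      ∃ ε' : ℝ, 0 < ε' ∧ ε' ≤ ε ∧
        (0 < G → ∀ α : ℝ, α ≠ α₀ → |α - α₀| < ε' → 0 < h α) ∧
        (G < 0 → ∀ α : ℝ, α ≠ α₀ → |α - α₀| < ε' → h α < 0) := by
  have hUreal : ∀ᶠ α : ℝ in 𝓝 α₀, (α : ℂ) ∈ U := eventually_nhds_ofReal (hU.mem_nhds hα₀)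
  have hzU : ∀ w ∈ U, DifferentiableAt ℂ z w := fun w hw => hz.differentiableAt (hU.mem_nhds hw)
  have hxα : ∀ α : ℝ, (α : ℂ) ∈ U →
      fderiv ℝ (fun w => (z w).re) (α : ℂ) 1 = (deriv z α).re := fun α hα => by
    rw [fderiv_re_apply (hzU α hα), mul_one]
  have hyα : ∀ α : ℝ, (α : ℂ) ∈ U →
      fderiv ℝ (fun w => (z w).im) (α : ℂ) 1 = (deriv z α).im := fun α hα => by
    rw [fderiv_im_apply (hzU α hα), mul_one]
  have hbernoulli := eventually_fderiv_sq_eq_of_eq_sqrt (hzU α₀ hα₀).continuousAt he <|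
    hUreal.mono fun α hα => by rw [hb α hα, hxα α hα, hyα α hα]
  rw [hxα α₀ hα₀] at hc
  rw [hyα α₀ hα₀] at hd
  obtain ⟨h, hsmooth, hself, hgraph, hasymp⟩ := exists_criticalLayer_eq_graph hG
    (hz.analyticAt (hU.mem_nhds hα₀)) (hψ.contDiffAt (hU.mem_nhds hα₀))
    (hUreal.mono ha) hbernoulli hc hd he.ne'
  have hUplane : ∀ᶠ p : ℝ × ℝ in 𝓝 (α₀, 0), (p.1 : ℂ) + p.2 * Complex.I ∈ U :=
    (hU.preimage (f := fun p : ℝ × ℝ => (p.1 : ℂ) + p.2 * Complex.I) (by fun_prop)).mem_nhds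
      (by simpa using hα₀)
  have hsmooth' : ∀ᶠ p : ℝ × ℝ in 𝓝 (α₀, 0), ContDiffAt ℝ 1 h p.1 :=
    continuousAt_fst.eventually (hsmooth.eventually (by simp))
  obtain ⟨ε, hε, hnear⟩ := exists_radius_of_eventually_prod (p := fun α β : ℝ =>
    ContDiffAt ℝ 1 h α ∧ (α : ℂ) + β * Complex.I ∈ U ∧
      (FnumC z ψ (α + β * Complex.I) = 0 ↔ β = h α)) (hsmooth'.and (hUplane.and hgraph))
  have hpos : ∀ᶠ α in 𝓝[≠] α₀, 0 < G * h α := by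
    refine (hasymp.mono nhdsWithin_le_nhds).eventually_pos ?_
    filter_upwards [hx, hUreal.filter_mono nhdsWithin_le_nhds] with α hα hαU
    rw [hxα α hαU] at hα
    positivity
  refine ⟨ε, hε, h, fun α hα => ?_, hself, fun α β hα hβ => (hnear α β hα hβ).2,
    exists_radius_forall_pos_and_forall_neg hε hpos⟩
  rw [← Real.ball_eq_Ioo] at hα
  exact (hnear α 0 hα (by simpa)).1.contDiffWithinAt

theorem stmt_12 (U : Set ℂ) (hU : IsOpen U) (α₀ : ℝ) (hα₀ : (α₀ : ℂ) ∈ U)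
    (z : ℂ → ℂ) (hz : DifferentiableOn ℂ z U)
    (ψ : ℂ → ℝ) (hψ : ContDiffOn ℝ (⊤ : ℕ∞) ψ U) (G B : ℝ) (hG : G ≠ 0)
    (ha : ∀ α : ℝ, (α : ℂ) ∈ U → ψ (α : ℂ) = 0)
    (hb : ∀ α : ℝ, (α : ℂ) ∈ U →
      fderiv ℝ ψ (α : ℂ) Complex.I
        = Real.sqrt (2 * (B - G * (z (α : ℂ)).im) *
            ((fderiv ℝ (fun w => (z w).re) (α : ℂ) 1) ^ 2
              + (fderiv ℝ (fun w => (z w).im) (α : ℂ) 1) ^ 2)))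
    (hc : fderiv ℝ (fun w => (z w).re) (α₀ : ℂ) 1 = 0)
    (hd : 0 < fderiv ℝ (fun w => (z w).im) (α₀ : ℂ) 1)
    (he : 0 < B - G * (z (α₀ : ℂ)).im)
    (k : ℕ) (hk2 : 2 ≤ k)
    (hkmin : ∀ j : ℕ, 1 ≤ j → j < k → iteratedDeriv j (fun α : ℝ => (z (α : ℂ)).re) α₀ = 0)
    (hkodd : Odd k)
    (hkpos : 0 < iteratedDeriv k (fun α : ℝ => (z (α : ℂ)).re) α₀) :
    ∃ ε > (0 : ℝ), ∃ h : ℝ → ℝ,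
      ContDiffOn ℝ 1 h (Set.Ioo (α₀ - ε) (α₀ + ε)) ∧
      h α₀ = 0 ∧
      (∀ α β : ℝ, |α - α₀| < ε → |β| < ε →
        ((α : ℂ) + (β : ℂ) * Complex.I ∈ U ∧
          (FnumC z ψ ((α : ℂ) + (β : ℂ) * Complex.I) = 0 ↔ β = h α))) ∧
      ∃ ε' : ℝ, 0 < ε' ∧ ε' ≤ ε ∧
        (0 < G → ∀ α : ℝ, α ≠ α₀ → |α - α₀| < ε' → 0 < h α) ∧
        (G < 0 → ∀ α : ℝ, α ≠ α₀ → |α - α₀| < ε' → h α < 0) := by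
  have hx : ContDiffAt ℝ k (fun w => (z w).re) (α₀ : ℂ) :=
    Complex.reCLM.contDiff.contDiffAt.comp _
      ((hz.analyticAt (hU.mem_nhds hα₀)).contDiffAt.restrict_scalars ℝ)
  exact stmt_12_general U hU α₀ hα₀ z hz ψ (contDiffOn_infty.1 hψ 2) G B hG ha hb hc hd.ne' he
    (eventually_fderiv_apply_one_pos_of_odd hx hkodd hkmin hkpos)
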